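/- Let 0 < d < 4/5. Then ∫₀¹∫₀¹ u^{3-3d} v^{1-d} (1-v)^{1-d} (1-uv)^{-2d} ₂F₁(1,d;2-d;v) ₂F₁(1,d;2-d; u(1-v)/(1-uv)) dv du = [Γ(1-d) Γ(3-3d) Γ(4-5d) / (2 Γ(4-4d) Γ(5-5d))] · ₄F₃(1, d, 2-2d, 3-3d; 2-d, 3-2d, 4-4d; 1). -/

import Mathlib

open Real MeasureTheory

/-- Pochhammer symbol `(a)_k = a (a+1) ⋯ (a+k-1)` for real `a`. -/
noncomputable def poch (a : ℝ) (k : ℕ) : ℝ := (ascPochhammer ℝ k).eval a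

/-- Gaussian hypergeometric function `₂F₁(a,b;c;z)`. -/
noncomputable def hyp2F1 (a b c z : ℝ) : ℝ :=
  ∑' k : ℕ, (poch a k * poch b k) / poch c k * z ^ k / (Nat.factorial k)

/-- Generalized hypergeometric function `₃F₂(a₁,a₂,a₃;b₁,b₂;z)`. -/
noncomputable def hyp3F2 (a₁ a₂ a₃ b₁ b₂ z : ℝ) : ℝ :=
  ∑' k : ℕ, (poch a₁ k * poch a₂ k * poch a₃ k) / (poch b₁ k * poch b₂ k) * z ^ k /
    (Nat.factorial k)

/-- Generalized hypergeometric function `₄F₃(a₁,a₂,a₃,a₄;b₁,b₂,b₃;z)`. -/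
noncomputable def hyp4F3 (a₁ a₂ a₃ a₄ b₁ b₂ b₃ z : ℝ) : ℝ :=
  ∑' k : ℕ, (poch a₁ k * poch a₂ k * poch a₃ k * poch a₄ k) /
    (poch b₁ k * poch b₂ k * poch b₃ k) * z ^ k / (Nat.factorial k)

open scoped ENNReal

noncomputable def psi (e t : ℝ) : ℝ≥0∞ := if 0 < t then ENNReal.ofReal (t ^ e) else 0

lemma psi_pos {e t : ℝ} (h : 0 < t) : psi e t = ENNReal.ofReal (t ^ e) := if_pos h
lemma psi_neg {e t : ℝ} (h : t ≤ 0) : psi e t = 0 := if_neg (not_lt.2 h)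

lemma psi_ne_top (e t : ℝ) : psi e t ≠ ∞ := by unfold psi; split_ifs <;> simp

lemma psi_measurable (e : ℝ) : Measurable (psi e) :=
  Measurable.ite measurableSet_Ioi (by fun_prop) (by fun_prop)

@[fun_prop]
lemma psi_measurable_comp {α : Type*} [MeasurableSpace α] (e : ℝ) {f : α → ℝ} (hf : Measurable f) :
    Measurable (fun x => psi e (f x)) := (psi_measurable e).comp hf

lemma psi_scale {c : ℝ} (hc : 0 < c) (e t : ℝ) :
    psi e (c * t) = ENNReal.ofReal (c ^ e) * psi e t := by
  by_cases h : 0 < t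
  · rw [psi_pos h, psi_pos (mul_pos hc h), Real.mul_rpow hc.le h.le,
      ENNReal.ofReal_mul (by positivity)]
  · push Not at h
    rw [psi_neg h, psi_neg (mul_nonpos_of_nonneg_of_nonpos hc.le h), mul_zero]

lemma psi_mul (a b t : ℝ) : psi a t * psi b t = psi (a + b) t := by
  by_cases h : 0 < t
  · rw [psi_pos h, psi_pos h, psi_pos h, Real.rpow_add h, ENNReal.ofReal_mul (by positivity)]
  · push Not at h
    simp [psi_neg h]

lemma lint_affine (g : ℝ → ℝ≥0∞) (b : ℝ) {c : ℝ} (hc : c ≠ 0) :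
    ∫⁻ x, g x = ENNReal.ofReal |c| * ∫⁻ x, g (b + c * x) := by
  have h1 : ∫⁻ x, g (b + c * x) = ∫⁻ x, (fun y => g (b + y)) x ∂(Measure.map (c * ·) volume) := by
    rw [MeasurableEmbedding.lintegral_map]
    exact (Homeomorph.mulLeft₀ c hc).measurableEmbedding
  rw [h1, Real.map_volume_mul_left hc, lintegral_smul_measure, smul_eq_mul, ← mul_assoc,
    ← ENNReal.ofReal_mul (abs_nonneg _), ← abs_mul, mul_inv_cancel₀ hc,
    lintegral_add_left_eq_self]
  simp

lemma lint_scale (g : ℝ → ℝ≥0∞) {c : ℝ} (hc : 0 < c) :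
    ∫⁻ x, g x = ENNReal.ofReal c * ∫⁻ x, g (c * x) := by
  have := lint_affine g 0 hc.ne'
  simpa [abs_of_pos hc] using this

lemma lint_beta1 {a b : ℝ} (ha : -1 < a) (hb : -1 < b) :
    ∫⁻ x, psi a x * psi b (1 - x) = ENNReal.ofReal (ProbabilityTheory.beta (a + 1) (b + 1)) := by
  have h := ProbabilityTheory.lintegral_betaPDF_eq_one (α := a + 1) (β := b + 1) (by linarith) (by linarith)
  have hp := ProbabilityTheory.beta_pos (α := a + 1) (β := b + 1) (by linarith) (by linarith)
  rw [← mul_one (ENNReal.ofReal _), ← h, ← lintegral_const_mul' _ _ ENNReal.ofReal_ne_top]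
  congr 1
  ext x
  by_cases hx : 0 < x ∧ x < 1
  · rw [ProbabilityTheory.betaPDF_of_pos_lt_one hx.1 hx.2, psi_pos hx.1, psi_pos (by linarith [hx.2]),
      ← ENNReal.ofReal_mul hp.le, ← ENNReal.ofReal_mul (Real.rpow_nonneg hx.1.le _)]
    congr 1
    field_simp
    ring_nf
  · rw [ProbabilityTheory.betaPDF_eq, if_neg hx]
    rw [not_and_or, not_lt, not_lt] at hx
    rcases hx with hx | hx
    · simp [psi_neg hx]
    · simp [psi_neg (show 1 - x ≤ 0 by linarith)]

lemma lint_beta {a b : ℝ} (ha : -1 < a) (hb : -1 < b) (y : ℝ) :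
    ∫⁻ x, psi a x * psi b (y - x) =
      ENNReal.ofReal (ProbabilityTheory.beta (a + 1) (b + 1)) * psi (a + b + 1) y := by
  by_cases hy : 0 < y
  · rw [lint_scale _ hy]
    have : ∀ x, psi a (y * x) * psi b (y - y * x) =
        ENNReal.ofReal (y ^ a) * ENNReal.ofReal (y ^ b) * (psi a x * psi b (1 - x)) := by
      intro x
      rw [show y - y * x = y * (1 - x) by ring, psi_scale hy, psi_scale hy]
      ring
    simp_rw [this]
    rw [lintegral_const_mul' _ _ (by finiteness), lint_beta1 ha hb, psi_pos hy,
      Real.rpow_add hy, Real.rpow_add hy, Real.rpow_one, ENNReal.ofReal_mul (by positivity),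
      ENNReal.ofReal_mul (by positivity)]
    ring
  · push Not at hy
    rw [psi_neg hy, mul_zero]
    rw [lintegral_eq_zero_iff (by fun_prop)]
    filter_upwards with x
    by_cases hx : 0 < x
    · simp [psi_neg (show y - x ≤ 0 by linarith)]
    · simp [psi_neg (not_lt.1 hx)]

lemma poch_zero (a : ℝ) : poch a 0 = 1 := by simp [poch]
lemma poch_succ (a : ℝ) (k : ℕ) : poch a (k + 1) = poch a k * (a + k) := by
  simp [poch, ascPochhammer_succ_eval]
lemma poch_pos {a : ℝ} (ha : 0 < a) (k : ℕ) : 0 < poch a k := ascPochhammer_pos k a ha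
lemma poch_one (k : ℕ) : poch 1 k = Nat.factorial k := by
  induction k with
  | zero => simp [poch_zero]
  | succ k ih => rw [poch_succ, ih, Nat.factorial_succ]; push_cast; ring
lemma Gamma_add_nat {a : ℝ} (ha : 0 < a) (k : ℕ) : Real.Gamma (a + k) = poch a k * Real.Gamma a := by
  induction k with
  | zero => simp [poch_zero]
  | succ k ih =>
    rw [poch_succ]; push_cast
    rw [← add_assoc, Real.Gamma_add_one (by positivity), ih]; ring
lemma poch_shift (a : ℝ) (k : ℕ) : poch (a + 1) k * a = poch a k * (a + k) := by
  induction k with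
  | zero => simp [poch_zero]
  | succ k ih =>
    rw [poch_succ, poch_succ]; push_cast
    linear_combination (a + 1 + k) * ih

lemma poch_le {a b : ℝ} (ha : 0 < a) (hab : a ≤ b) (k : ℕ) : poch a k ≤ poch b k := by
  induction k with
  | zero => simp [poch_zero]
  | succ k ih =>
    rw [poch_succ, poch_succ]
    have := (poch_pos ha k).le
    have := (poch_pos (ha.trans_le hab) k).le
    gcongr

lemma binom_series (d : ℝ) {s : ℝ} (h0 : 0 ≤ s) (h1 : s < 1) :
    HasSum (fun k : ℕ => poch d k / Nat.factorial k * s ^ k) ((1 - s) ^ (-d)) := by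
  have h := (Real.one_div_one_sub_rpow_hasFPowerSeriesOnBall_zero d).hasSum (y := s)
    (by simpa [Real.enorm_eq_ofReal h0] using h1)
  rw [zero_add, one_div, ← Real.rpow_neg (by linarith)] at h
  have key : ∀ k : ℕ, (FormalMultilinearSeries.ofScalars ℝ
      (fun n : ℕ => Ring.choose (d + n - 1) n) k) (fun _ => s) =
      poch d k / Nat.factorial k * s ^ k := by
    intro k
    rw [FormalMultilinearSeries.ofScalars_apply_eq, smul_eq_mul]
    congr 1
    have h2 := Ring.multichoose_eq (R := ℝ) d k
    have h3 := Ring.factorial_nsmul_multichoose_eq_ascPochhammer (R := ℝ) d k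
    rw [← h2]
    rw [nsmul_eq_mul, Polynomial.ascPochhammer_smeval_eq_eval] at h3
    rw [poch, ← h3]
    field_simp
  simp_rw [key] at h
  exact h

noncomputable def GG (d y : ℝ) : ℝ≥0∞ := ∫⁻ s, psi 0 s * psi (-d) (y - s) * psi (-d) (1 - s)

@[fun_prop]
lemma GG_measurable (d : ℝ) : Measurable (GG d) := by
  unfold GG
  apply Measurable.lintegral_prod_right'
    (f := fun p : ℝ × ℝ => psi 0 p.2 * psi (-d) (p.1 - p.2) * psi (-d) (1 - p.2))
  fun_prop

noncomputable def cc (d : ℝ) (k : ℕ) : ℝ := poch d k / poch (2 - d) k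

lemma cc_pos {d : ℝ} (h0 : 0 < d) (h1 : d < 1) (k : ℕ) : 0 < cc d k :=
  div_pos (poch_pos h0 k) (poch_pos (by linarith) k)

lemma cc_le {d : ℝ} (h0 : 0 < d) (h1 : d < 1) (k : ℕ) : cc d k ≤ 1 :=
  div_le_one_of_le₀ (poch_le h0 (by linarith) k) (poch_pos (by linarith) k).le

lemma GG_series {d : ℝ} (h0 : 0 < d) (h1 : d < 1) {y : ℝ} (hy : y ≤ 1) :
    GG d y = ∑' k : ℕ, ENNReal.ofReal (cc d k / (1 - d)) * psi (k + 1 - d) y := by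
  have e : ∀ s, psi 0 s * psi (-d) (y - s) * psi (-d) (1 - s) =
      ∑' k : ℕ, ENNReal.ofReal (poch d k / Nat.factorial k) * (psi k s * psi (-d) (y - s)) := by
    intro s
    by_cases hs : 0 < s
    swap
    · simp [psi_neg (not_lt.1 hs)]
    by_cases hsy : 0 < y - s
    swap
    · simp [psi_neg (not_lt.1 hsy)]
    have hb := binom_series d hs.le (by linarith)
    rw [psi_pos (show 0 < 1 - s by linarith), ← hb.tsum_eq,
      ENNReal.ofReal_tsum_of_nonneg _ hb.summable, ← ENNReal.tsum_mul_left]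
    · congr 1
      ext k
      rw [psi_pos hs, psi_pos hs, ENNReal.ofReal_mul (div_nonneg (poch_pos h0 k).le (by positivity))]
      simp
      ring
    · intro k
      have := (poch_pos h0 k).le
      positivity
  unfold GG
  simp_rw [e]
  rw [lintegral_tsum (fun k => by fun_prop)]
  congr 1
  ext k
  have hk : (0:ℝ) ≤ k := k.cast_nonneg
  rw [lintegral_const_mul' _ _ (by finiteness), lint_beta (by linarith) (by linarith), ← mul_assoc,
    ← ENNReal.ofReal_mul (div_nonneg (poch_pos h0 k).le (by positivity))]
  congr 1
  · congr 1
    unfold cc ProbabilityTheory.beta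
    rw [show -d + 1 = 1 - d by ring, show (k:ℝ) + 1 + (1 - d) = (2 - d) + k by ring, Gamma_add_nat (by linarith),
      Real.Gamma_nat_eq_factorial, show 2 - d = (1 - d) + 1 by ring,
      Real.Gamma_add_one (show 1 - d ≠ 0 by linarith)]
    have := (Real.Gamma_pos_of_pos (show 0 < 1 - d by linarith)).ne'
    have := (poch_pos (show 0 < 1 - d + 1 by linarith) k).ne'
    have : 1 - d ≠ 0 := by linarith
    field_simp
  · congr 1; ring

lemma hyp_hasSum {d : ℝ} (h0 : 0 < d) (h1 : d < 1) {y : ℝ} (hy0 : 0 < y) (hy : y < 1) :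
    HasSum (fun k : ℕ => cc d k * y ^ k) (hyp2F1 1 d (2 - d) y) := by
  have e : hyp2F1 1 d (2 - d) y = ∑' k : ℕ, cc d k * y ^ k := by
    unfold hyp2F1 cc
    congr 1
    ext k
    rw [poch_one]
    have := (poch_pos (show 0 < 2 - d by linarith) k).ne'
    field_simp
  rw [e]
  apply Summable.hasSum
  refine Summable.of_nonneg_of_le (fun k => ?_) (fun k => ?_) (summable_geometric_of_lt_one hy0.le hy)
  · have := (cc_pos h0 h1 k).le; positivity
  · exact mul_le_of_le_one_left (by positivity) (cc_le h0 h1 k)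

lemma hyp_nonneg {d : ℝ} (h0 : 0 < d) (h1 : d < 1) {y : ℝ} (hy0 : 0 < y) (hy : y < 1) :
    0 ≤ hyp2F1 1 d (2 - d) y :=
  (hyp_hasSum h0 h1 hy0 hy).nonneg (fun k => by have := (cc_pos h0 h1 k).le; positivity)

lemma GG_eq {d : ℝ} (h0 : 0 < d) (h1 : d < 1) {y : ℝ} (hy0 : 0 < y) (hy : y < 1) :
    ENNReal.ofReal (1 - d) * GG d y = ENNReal.ofReal (y ^ (1 - d) * hyp2F1 1 d (2 - d) y) := by
  have hs := hyp_hasSum h0 h1 hy0 hy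
  rw [ENNReal.ofReal_mul (by positivity), ← hs.tsum_eq, ENNReal.ofReal_tsum_of_nonneg _ hs.summable,
    GG_series h0 h1 hy.le, ← ENNReal.tsum_mul_left, ← ENNReal.tsum_mul_left]
  · congr 1
    ext k
    have hc := (cc_pos h0 h1 k).le
    have : 0 < 1 - d := by linarith
    rw [psi_pos hy0, ← ENNReal.ofReal_mul (by positivity), ← ENNReal.ofReal_mul (by positivity),
      ← ENNReal.ofReal_mul (by positivity), show (k:ℝ) + 1 - d = (1 - d) + k by ring,
      Real.rpow_add hy0, Real.rpow_natCast]
    congr 1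
    field_simp
  · intro k; have := (cc_pos h0 h1 k).le; positivity

noncomputable def JJ (d : ℝ) : ℝ≥0∞ :=
  ∫⁻ z, psi (-d) z * psi (-d) (1 - z) * ∫⁻ y, psi 0 (z - y) * psi (-d) y * GG d y

lemma JJ_series {d : ℝ} (h0 : 0 < d) (h1 : d < 1) :
    JJ d = ∑' k : ℕ, ENNReal.ofReal (cc d k / (1 - d)) *
      (ENNReal.ofReal (ProbabilityTheory.beta (k + 2 - 2 * d) 1) *
       ENNReal.ofReal (ProbabilityTheory.beta (k + 3 - 3 * d) (1 - d))) := by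
  have e : ∀ z, psi (-d) z * psi (-d) (1 - z) * ∫⁻ y, psi 0 (z - y) * psi (-d) y * GG d y =
      ∑' k : ℕ, ENNReal.ofReal (cc d k / (1 - d)) *
      (ENNReal.ofReal (ProbabilityTheory.beta (k + 2 - 2 * d) 1) *
       (psi (k + 2 - 3 * d) z * psi (-d) (1 - z))) := by
    intro z
    by_cases hz : 0 < 1 - z
    swap
    · simp [psi_neg (not_lt.1 hz)]
    have e2 : ∀ y, psi 0 (z - y) * psi (-d) y * GG d y =
        ∑' k : ℕ, ENNReal.ofReal (cc d k / (1 - d)) * (psi (k + 1 - 2 * d) y * psi 0 (z - y)) := by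
      intro y
      by_cases hy : 0 < z - y
      swap
      · simp [psi_neg (not_lt.1 hy)]
      rw [GG_series h0 h1 (by linarith), ← ENNReal.tsum_mul_left]
      congr 1
      ext k
      rw [show (k:ℝ) + 1 - 2 * d = -d + (k + 1 - d) by ring, ← psi_mul (-d)]
      ring
    simp_rw [e2]
    rw [lintegral_tsum (fun k => by fun_prop), ← ENNReal.tsum_mul_left]
    congr 1
    ext k
    have hk : (0:ℝ) ≤ k := k.cast_nonneg
    rw [lintegral_const_mul' _ _ (by finiteness), lint_beta (by linarith) (by linarith),
      show (k:ℝ) + 2 - 3 * d = -d + (k + 1 - 2 * d + 0 + 1) by ring, ← psi_mul (-d),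
      show (k:ℝ) + 1 - 2 * d + 1 = k + 2 - 2 * d by ring, zero_add]
    ring
  unfold JJ
  simp_rw [e]
  rw [lintegral_tsum (fun k => by fun_prop)]
  congr 1
  ext k
  have hk : (0:ℝ) ≤ k := k.cast_nonneg
  rw [lintegral_const_mul' _ _ (by finiteness), lintegral_const_mul' _ _ (by finiteness),
    lint_beta1 (by linarith) (by linarith)]
  congr 4 <;> ring

noncomputable def TT (d : ℝ) (k : ℕ) : ℝ :=
  (poch 1 k * poch d k * poch (2 - 2 * d) k * poch (3 - 3 * d) k) /
    (poch (2 - d) k * poch (3 - 2 * d) k * poch (4 - 4 * d) k) * (1:ℝ) ^ k / (Nat.factorial k)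

lemma TT_eq {d : ℝ} (h1 : d < 1) (k : ℕ) :
    TT d k = cc d k * ((2 - 2 * d) / (2 - 2 * d + k)) * (poch (3 - 3 * d) k / poch (4 - 4 * d) k) := by
  have hs := poch_shift (2 - 2 * d) k
  rw [show 2 - 2 * d + 1 = 3 - 2 * d by ring] at hs
  unfold TT cc
  rw [poch_one]
  have := (poch_pos (show 0 < 2 - d by linarith) k).ne'
  have := (poch_pos (show 0 < 3 - 2 * d by linarith) k).ne'
  have := (poch_pos (show 0 < 4 - 4 * d by linarith) k).ne'
  have hk : (0:ℝ) ≤ k := k.cast_nonneg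
  have h2 : 2 - 2 * d + k ≠ 0 := by linarith
  rw [one_pow]
  generalize poch (4 - 4 * d) k = A at *
  generalize poch (3 - 3 * d) k = B at *
  generalize poch (3 - 2 * d) k = C at *
  have hf : (Nat.factorial k : ℝ) ≠ 0 := by positivity
  generalize hD : poch (2 - 2 * d) k = D at *
  generalize hE : 2 - 2 * d = E at *
  field_simp
  linear_combination -(poch d k * B) * hs

lemma TT_nonneg {d : ℝ} (h0 : 0 < d) (h1 : d < 1) (k : ℕ) : 0 ≤ TT d k := by
  rw [TT_eq h1]
  have := (cc_pos h0 h1 k).le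
  have := (poch_pos (show 0 < 3 - 3 * d by linarith) k).le
  have := (poch_pos (show 0 < 4 - 4 * d by linarith) k).le
  have : 0 < 2 - 2 * d := by linarith
  positivity

lemma TT_summable {d : ℝ} (h0 : 0 < d) (h1 : d < 1) : Summable (TT d) := by
  have hpos : 0 < 2 - 2 * d := by linarith
  have hb : ∀ k, TT d k ≤ (2 - d) / (2 - 2 * d) * (cc d k - cc d (k + 1)) := by
    intro k
    have hc := (cc_pos h0 h1 k)
    have hk : (0:ℝ) ≤ k := k.cast_nonneg
    have hr : poch (3 - 3 * d) k / poch (4 - 4 * d) k ≤ 1 :=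
      div_le_one_of_le₀ (poch_le (by linarith) (by linarith) k) (poch_pos (by linarith) k).le
    have hd : cc d k - cc d (k + 1) = cc d k * ((2 - 2 * d) / (2 - d + k)) := by
      unfold cc
      rw [poch_succ, poch_succ]
      have := (poch_pos (show 0 < 2 - d by linarith) k).ne'
      have : 2 - d + k ≠ 0 := by linarith
      field_simp
      ring
    rw [TT_eq h1, hd]
    have h3 : 0 < 2 - 2 * d + k := by linarith
    have h4 : 0 < 2 - d + k := by linarith
    calc _ ≤ cc d k * ((2 - 2 * d) / (2 - 2 * d + k)) * 1 := by gcongr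
      _ ≤ _ := by
        rw [mul_one, mul_left_comm]
        gcongr
        rw [div_mul_div_comm, div_le_div_iff₀ h3 (by positivity)]
        nlinarith [mul_nonneg (mul_nonneg hpos.le hk) h0.le]
  refine summable_of_sum_range_le (c := (2 - d) / (2 - 2 * d) * 1) (TT_nonneg h0 h1) (fun n => ?_)
  calc _ ≤ ∑ k ∈ Finset.range n, (2 - d) / (2 - 2 * d) * (cc d k - cc d (k + 1)) :=
        Finset.sum_le_sum (fun k _ => hb k)
    _ ≤ _ := by
      rw [← Finset.mul_sum, Finset.sum_range_sub']
      have : cc d 0 = 1 := by simp [cc, poch_zero]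
      have h2 := (cc_pos h0 h1 n).le
      have h5 : 0 < 2 - d := by linarith
      gcongr
      linarith

lemma JJ_eq {d : ℝ} (h0 : 0 < d) (h1 : d < 1) :
    JJ d = ENNReal.ofReal (Real.Gamma (1 - d) * Real.Gamma (3 - 3 * d) /
      (2 * (1 - d) ^ 2 * Real.Gamma (4 - 4 * d)) *
      hyp4F3 1 d (2 - 2 * d) (3 - 3 * d) (2 - d) (3 - 2 * d) (4 - 4 * d) 1) := by
  have hF : hyp4F3 1 d (2 - 2 * d) (3 - 3 * d) (2 - d) (3 - 2 * d) (4 - 4 * d) 1 = ∑' k, TT d k := rfl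
  have g1 := Real.Gamma_pos_of_pos (show 0 < 1 - d by linarith)
  have g3 := Real.Gamma_pos_of_pos (show 0 < 3 - 3 * d by linarith)
  have g4 := Real.Gamma_pos_of_pos (show 0 < 4 - 4 * d by linarith)
  have hd : 0 < 1 - d := by linarith
  rw [hF, ENNReal.ofReal_mul (by positivity),
    ENNReal.ofReal_tsum_of_nonneg (TT_nonneg h0 h1) (TT_summable h0 h1), JJ_series h0 h1,
    ← ENNReal.tsum_mul_left]
  congr 1
  ext k
  have hk : (0:ℝ) ≤ k := k.cast_nonneg
  have hc := (cc_pos h0 h1 k).le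
  have b1 := (ProbabilityTheory.beta_pos (α := k + 2 - 2 * d) (β := 1) (by linarith) (by linarith)).le
  rw [← ENNReal.ofReal_mul b1, ← ENNReal.ofReal_mul (by positivity),
    ← ENNReal.ofReal_mul (by positivity), TT_eq h1]
  congr 1
  unfold ProbabilityTheory.beta
  rw [Real.Gamma_one, Real.Gamma_add_one (by linarith),
    show (k:ℝ) + 3 - 3 * d + (1 - d) = (4 - 4 * d) + k by ring,
    show (k:ℝ) + 3 - 3 * d = (3 - 3 * d) + k by ring, Gamma_add_nat (by linarith),
    Gamma_add_nat (by linarith)]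
  have := (Real.Gamma_pos_of_pos (show 0 < k + 2 - 2 * d by linarith)).ne'
  have := (poch_pos (show 0 < 4 - 4 * d by linarith) k).ne'
  have : k + 2 - 2 * d ≠ 0 := by linarith
  rw [show 2 - 2 * d + k = k + 2 - 2 * d by ring, show 2 - 2 * d = 2 * (1 - d) by ring]
  generalize poch (4 - 4 * d) k = A at *
  generalize poch (3 - 3 * d) k = B at *
  generalize Real.Gamma (k + 2 - 2 * d) = C at *
  generalize Real.Gamma (3 - 3 * d) = C3 at *
  generalize Real.Gamma (4 - 4 * d) = C4 at *
  generalize (k + 2 - 2 * d) = D at *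
  field_simp

lemma GG_nonpos (d : ℝ) {y : ℝ} (hy : y ≤ 0) : GG d y = 0 := by
  unfold GG
  rw [lintegral_eq_zero_iff (by fun_prop)]
  filter_upwards with x
  by_cases hx : 0 < x
  · simp [psi_neg (show y - x ≤ 0 by linarith)]
  · simp [psi_neg (not_lt.1 hx)]

lemma GG_hom (d y : ℝ) {c : ℝ} (hc : 0 < c) :
    ∫⁻ s, psi 0 s * psi (-d) (y - s) * psi (-d) (c - s) =
      ENNReal.ofReal (c ^ (1 - 2 * d)) * GG d (y / c) := by
  rw [lint_scale _ hc]
  have : ∀ x, psi 0 (c * x) * psi (-d) (y - c * x) * psi (-d) (c - c * x) =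
      ENNReal.ofReal (c ^ (-d)) * ENNReal.ofReal (c ^ (-d)) *
        (psi 0 x * psi (-d) (y / c - x) * psi (-d) (1 - x)) := by
    intro x
    rw [show y - c * x = c * (y / c - x) by field_simp, show c - c * x = c * (1 - x) by ring,
      psi_scale hc, psi_scale hc, psi_scale hc]
    simp
    ring
  simp_rw [this]
  rw [lintegral_const_mul' _ _ (by finiteness), GG, ← mul_assoc, ← ENNReal.ofReal_mul (by positivity),
    ← ENNReal.ofReal_mul (by positivity), ← Real.rpow_add hc, show 1 - 2 * d = 1 + (-d + -d) by ring,
    Real.rpow_add hc 1, Real.rpow_one]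

lemma swap4 (K : ℝ → ℝ → ℝ → ℝ → ℝ≥0∞)
    (hK : Measurable (fun x : ((ℝ × ℝ) × ℝ) × ℝ => K x.1.1.1 x.1.1.2 x.1.2 x.2)) :
    ∫⁻ u, ∫⁻ a, ∫⁻ p, ∫⁻ q, K p a q u = ∫⁻ p, ∫⁻ a, ∫⁻ q, ∫⁻ u, K p a q u := by
  have s1 : ∫⁻ u, ∫⁻ a, ∫⁻ p, ∫⁻ q, K p a q u = ∫⁻ a, ∫⁻ u, ∫⁻ p, ∫⁻ q, K p a q u := by
    apply lintegral_lintegral_swap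
    apply Measurable.aemeasurable
    apply Measurable.lintegral_prod_right' (f := fun x : (ℝ × ℝ) × ℝ => ∫⁻ q, K x.2 x.1.2 q x.1.1)
    apply Measurable.lintegral_prod_right' (f := fun x : ((ℝ × ℝ) × ℝ) × ℝ => K x.1.2 x.1.1.2 x.2 x.1.1.1)
    exact hK.comp (f := fun x : ((ℝ × ℝ) × ℝ) × ℝ => (((x.1.2, x.1.1.2), x.2), x.1.1.1)) (by fun_prop)
  have s2 : ∀ a, ∫⁻ u, ∫⁻ p, ∫⁻ q, K p a q u = ∫⁻ p, ∫⁻ u, ∫⁻ q, K p a q u := by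
    intro a
    apply lintegral_lintegral_swap
    apply Measurable.aemeasurable
    apply Measurable.lintegral_prod_right' (f := fun x : (ℝ × ℝ) × ℝ => K x.1.2 a x.2 x.1.1)
    exact hK.comp (f := fun x : (ℝ × ℝ) × ℝ => (((x.1.2, a), x.2), x.1.1)) (by fun_prop)
  have s3 : ∀ a p, ∫⁻ u, ∫⁻ q, K p a q u = ∫⁻ q, ∫⁻ u, K p a q u := by
    intro a p
    apply lintegral_lintegral_swap
    apply Measurable.aemeasurable
    exact hK.comp (f := fun x : ℝ × ℝ => (((p, a), x.2), x.1)) (by fun_prop)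
  rw [s1]
  simp_rw [s2, s3]
  apply lintegral_lintegral_swap
  apply Measurable.aemeasurable
  apply Measurable.lintegral_prod_right' (f := fun x : (ℝ × ℝ) × ℝ => ∫⁻ u, K x.1.2 x.1.1 x.2 u)
  apply Measurable.lintegral_prod_right' (f := fun x : ((ℝ × ℝ) × ℝ) × ℝ => K x.1.1.2 x.1.1.1 x.1.2 x.2)
  exact hK.comp (f := fun x : ((ℝ × ℝ) × ℝ) × ℝ => (((x.1.1.2, x.1.1.1), x.1.2), x.2)) (by fun_prop)

noncomputable def Ker (d p a q u : ℝ) : ℝ≥0∞ :=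
  (psi 0 p * psi (-d) (a - p) * psi (-d) (u - p)) *
    (psi 0 (q - a) * psi (-d) (u - q) * psi (-d) (1 - q)) * psi (-d) (1 - a) * psi 0 (1 - u)

lemma Ker_pauq (d : ℝ) (h1 : d < 4 / 5) :
    ∫⁻ p, ∫⁻ a, ∫⁻ q, ∫⁻ u, Ker d p a q u = ENNReal.ofReal (1 / (4 - 5 * d)) * JJ d := by
  have inner : ∀ p q, 0 < 1 - p → ∫⁻ u, psi 0 (1 - u) * psi (-d) (u - q) * psi (-d) (u - p) =
      ENNReal.ofReal ((1 - p) ^ (1 - 2 * d)) * GG d ((1 - q) / (1 - p)) := by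
    intro p q hp
    rw [lint_affine _ 1 (c := -1) (by norm_num), ← GG_hom d _ hp]
    simp only [abs_neg, abs_one, ENNReal.ofReal_one, one_mul]
    congr 1
    ext s
    congr 1
    · congr 2 <;> ring
    · congr 1; ring
  have main : ∀ p, ∫⁻ a, ∫⁻ q, ∫⁻ u, Ker d p a q u = psi 0 p * psi (3 - 5 * d) (1 - p) * JJ d := by
    intro p
    by_cases hp : 0 < 1 - p
    swap
    · rw [psi_neg (not_lt.1 hp)]
      have : ∀ a q u, Ker d p a q u = 0 := by
        intro a q u
        unfold Ker
        by_cases ha : 0 < 1 - a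
        · simp [psi_neg (show a - p ≤ 0 by linarith)]
        · simp [psi_neg (not_lt.1 ha)]
      simp [this]
    set X := 1 - p with hX
    have e1 : ∀ a q, ∫⁻ u, Ker d p a q u = (psi 0 p * psi (-d) (a - p) * psi (-d) (1 - a)) *
        (psi 0 (q - a) * psi (-d) (1 - q) *
          (ENNReal.ofReal (X ^ (1 - 2 * d)) * GG d ((1 - q) / X))) := by
      intro a q
      rw [← inner p q hp, ← mul_assoc, ← lintegral_const_mul]
      · congr 1
        ext u
        unfold Ker
        ring
      · fun_prop
    simp_rw [e1]
    have e2 : ∀ z, ∫⁻ q, psi 0 (q - (1 - X * z)) * psi (-d) (1 - q) *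
          (ENNReal.ofReal (X ^ (1 - 2 * d)) * GG d ((1 - q) / X)) =
        ENNReal.ofReal X * (ENNReal.ofReal (X ^ (-d)) * ENNReal.ofReal (X ^ (1 - 2 * d))) *
          ∫⁻ y, psi 0 (z - y) * psi (-d) y * GG d y := by
      intro z
      rw [lint_affine _ 1 (c := -X) (by linarith), abs_neg, abs_of_pos hp, mul_assoc]
      congr 1
      rw [← lintegral_const_mul' _ _ (by finiteness)]
      congr 1
      ext y
      rw [show 1 + -X * y - (1 - X * z) = X * (z - y) by ring,
        show 1 - (1 + -X * y) = X * y by ring, psi_scale hp, psi_scale hp,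
        mul_div_cancel_left₀ _ hp.ne']
      simp
      ring
    have e3 : ∀ a, ∫⁻ q, (psi 0 p * psi (-d) (a - p) * psi (-d) (1 - a)) *
        (psi 0 (q - a) * psi (-d) (1 - q) *
          (ENNReal.ofReal (X ^ (1 - 2 * d)) * GG d ((1 - q) / X))) =
        (psi 0 p * psi (-d) (a - p) * psi (-d) (1 - a)) *
        ∫⁻ q, (psi 0 (q - a) * psi (-d) (1 - q) *
          (ENNReal.ofReal (X ^ (1 - 2 * d)) * GG d ((1 - q) / X))) := by
      intro a
      rw [lintegral_const_mul]
      fun_prop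
    simp_rw [e3]
    rw [lint_affine _ 1 (c := -X) (by linarith), abs_neg, abs_of_pos hp]
    have e4 : ∀ z, psi 0 p * psi (-d) (1 + -X * z - p) * psi (-d) (1 - (1 + -X * z)) *
        ∫⁻ q, (psi 0 (q - (1 + -X * z)) * psi (-d) (1 - q) *
          (ENNReal.ofReal (X ^ (1 - 2 * d)) * GG d ((1 - q) / X))) =
        (psi 0 p * (ENNReal.ofReal (X ^ (-d)) * ENNReal.ofReal (X ^ (-d)) *
          (ENNReal.ofReal X * (ENNReal.ofReal (X ^ (-d)) * ENNReal.ofReal (X ^ (1 - 2 * d)))))) *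
        (psi (-d) z * psi (-d) (1 - z) * ∫⁻ y, psi 0 (z - y) * psi (-d) y * GG d y) := by
      intro z
      rw [show 1 + -X * z = 1 - X * z by ring, e2, show 1 - X * z - p = X * (1 - z) by rw [hX]; ring,
        show 1 - (1 - X * z) = X * z by ring, psi_scale hp, psi_scale hp]
      ring
    simp_rw [e4]
    have := psi_ne_top 0 p
    rw [lintegral_const_mul' _ _ (by finiteness), psi_pos hp, ← JJ,
      show 3 - 5 * d = 1 + (-d + -d + (1 + (-d + (1 - 2 * d)))) by ring,
      Real.rpow_add hp, Real.rpow_add hp, Real.rpow_add hp, Real.rpow_add hp 1, Real.rpow_add hp,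
      Real.rpow_one, ENNReal.ofReal_mul (by positivity), ENNReal.ofReal_mul (by positivity),
      ENNReal.ofReal_mul (by positivity), ENNReal.ofReal_mul (by positivity),
      ENNReal.ofReal_mul (by positivity)]
    ring
  simp_rw [main]
  rw [lintegral_mul_const _ (by fun_prop), lint_beta1 (by norm_num) (by linarith)]
  congr 2
  unfold ProbabilityTheory.beta
  have h4 : 0 < 4 - 5 * d := by linarith
  have := (Real.Gamma_pos_of_pos h4).ne'
  rw [show (0:ℝ) + 1 + (3 - 5 * d + 1) = 4 - 5 * d + 1 by ring, Real.Gamma_add_one h4.ne',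
    zero_add, Real.Gamma_one, show 3 - 5 * d + 1 = 4 - 5 * d by ring]
  field_simp

noncomputable def ff (d u v : ℝ) : ℝ :=
  u ^ (3 - 3 * d) * v ^ (1 - d) * (1 - v) ^ (1 - d) * (1 - u * v) ^ (-(2 * d)) *
        hyp2F1 1 d (2 - d) v * hyp2F1 1 d (2 - d) (u * (1 - v) / (1 - u * v))

lemma w_mem {u v : ℝ} (hu0 : 0 < u) (hu1 : u < 1) (hv0 : 0 < v) (hv1 : v < 1) :
    0 < 1 - u * v ∧ 0 < u * (1 - v) / (1 - u * v) ∧ u * (1 - v) / (1 - u * v) < 1 := by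
  have h : 0 < 1 - u * v := by nlinarith
  refine ⟨h, div_pos (mul_pos hu0 (by linarith)) h, ?_⟩
  rw [div_lt_one h]; linarith

lemma ff_eq {d : ℝ} (h0 : 0 < d) (h1 : d < 1) {u v : ℝ} (hu0 : 0 < u) (hu1 : u < 1)
    (hv0 : 0 < v) (hv1 : v < 1) :
    ENNReal.ofReal (ff d u v) = ENNReal.ofReal ((1 - d) ^ 2) *
      ENNReal.ofReal (u ^ (2 - 2 * d) * (1 - u * v) ^ (1 - 3 * d)) *
      (GG d v * GG d (u * (1 - v) / (1 - u * v))) := by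
  obtain ⟨hx, hw0, hw1⟩ := w_mem hu0 hu1 hv0 hv1
  have hd : 0 ≤ 1 - d := by linarith
  have hF1 := hyp_nonneg h0 h1 hv0 hv1
  have hF2 := hyp_nonneg h0 h1 hw0 hw1
  have : ENNReal.ofReal ((1 - d) ^ 2) *
      ENNReal.ofReal (u ^ (2 - 2 * d) * (1 - u * v) ^ (1 - 3 * d)) *
      (GG d v * GG d (u * (1 - v) / (1 - u * v))) =
      ENNReal.ofReal (u ^ (2 - 2 * d) * (1 - u * v) ^ (1 - 3 * d)) *
      ((ENNReal.ofReal (1 - d) * GG d v) *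
        (ENNReal.ofReal (1 - d) * GG d (u * (1 - v) / (1 - u * v)))) := by
    rw [sq, ENNReal.ofReal_mul hd]; ring
  rw [this, GG_eq h0 h1 hv0 hv1, GG_eq h0 h1 hw0 hw1, ← ENNReal.ofReal_mul (by positivity),
    ← ENNReal.ofReal_mul (by positivity)]
  congr 1
  unfold ff
  have hv : 0 ≤ 1 - v := by linarith
  rw [Real.div_rpow (by positivity) hx.le, Real.mul_rpow hu0.le hv,
    show 3 - 3 * d = (2 - 2 * d) + (1 - d) by ring, Real.rpow_add hu0 (2 - 2 * d),
    show 1 - 3 * d = -(2 * d) + (1 - d) by ring, Real.rpow_add hx]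
  have := (Real.rpow_pos_of_pos hx (1 - d)).ne'
  generalize (1 - u * v) ^ (1 - d) = A at *
  field_simp

lemma ff_lint {d : ℝ} (h0 : 0 < d) (h1 : d < 1) :
    ∫⁻ u in Set.Ioo 0 1, ∫⁻ v in Set.Ioo 0 1, ENNReal.ofReal (ff d u v) =
      ENNReal.ofReal ((1 - d) ^ 2) * ∫⁻ u, ∫⁻ a, ∫⁻ p, ∫⁻ q, Ker d p a q u := by
  rw [← lintegral_const_mul' _ _ (by finiteness), ← lintegral_indicator measurableSet_Ioo]
  congr 1
  ext u
  by_cases hu : u ∈ Set.Ioo (0:ℝ) 1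
  swap
  · rw [Set.indicator_of_notMem hu]
    have : ∀ p a q, Ker d p a q u = 0 := by
      intro p a q
      unfold Ker
      by_cases hu1 : 0 < 1 - u
      · have hu0 : u ≤ 0 := by
          by_contra h
          exact hu ⟨by linarith, by linarith⟩
        by_cases hp : 0 < p
        · simp [psi_neg (show u - p ≤ 0 by linarith)]
        · simp [psi_neg (not_lt.1 hp)]
      · simp [psi_neg (not_lt.1 hu1)]
    simp [this]
  rw [Set.indicator_of_mem hu]
  obtain ⟨hu0, hu1⟩ := hu
  rw [lint_scale _ hu0, ← lintegral_const_mul' _ _ (by finiteness),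
    ← lintegral_const_mul' _ _ (by finiteness), ← lintegral_indicator measurableSet_Ioo]
  congr 1
  ext v
  have eY : ∫⁻ p, ∫⁻ q, Ker d p (u * v) q u = psi (-d) (1 - u * v) *
      ((ENNReal.ofReal (u ^ (1 - 2 * d)) * GG d v) *
      ∫⁻ q, psi 0 (q - u * v) * psi (-d) (u - q) * psi (-d) (1 - q)) := by
    have : ∀ p, ∫⁻ q, Ker d p (u * v) q u =
        (psi 0 p * psi (-d) (u * v - p) * psi (-d) (u - p)) * (psi (-d) (1 - u * v) *
        ∫⁻ q, psi 0 (q - u * v) * psi (-d) (u - q) * psi (-d) (1 - q)) := by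
      intro p
      rw [← mul_assoc, ← lintegral_const_mul _ (by fun_prop)]
      congr 1
      ext q
      have : psi 0 (1 - u) = 1 := by rw [psi_pos (by linarith)]; simp
      unfold Ker
      rw [this]
      ring
    simp_rw [this]
    rw [lintegral_mul_const _ (by fun_prop), GG_hom d _ hu0, mul_div_cancel_left₀ _ hu0.ne']
    ring
  rw [eY]
  by_cases hx : 0 < 1 - u * v
  swap
  · have : v ∉ Set.Ioo (0:ℝ) 1 := by
      intro hv
      exact hx (w_mem hu0 hu1 hv.1 hv.2).1
    rw [Set.indicator_of_notMem this, psi_neg (not_lt.1 hx)]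
    simp
  have eQ : ∫⁻ q, psi 0 (q - u * v) * psi (-d) (u - q) * psi (-d) (1 - q) =
      ENNReal.ofReal ((1 - u * v) ^ (1 - 2 * d)) * GG d (u * (1 - v) / (1 - u * v)) := by
    rw [← GG_hom d _ hx, ← lintegral_add_left_eq_self _ (u * v)]
    congr 1
    ext s
    congr 1
    · congr 2 <;> ring
    · congr 1; ring
  rw [eQ]
  by_cases hv : v ∈ Set.Ioo (0:ℝ) 1
  swap
  · rw [Set.indicator_of_notMem hv]
    by_cases hv0 : 0 < v
    · have hv1 : 1 ≤ v := by
        by_contra h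
        exact hv ⟨hv0, by linarith⟩
      rw [GG_nonpos d (y := u * (1 - v) / (1 - u * v))]
      · simp
      · exact div_nonpos_of_nonpos_of_nonneg
          (mul_nonpos_of_nonneg_of_nonpos hu0.le (by linarith)) hx.le
    · rw [GG_nonpos d (not_lt.1 hv0)]
      simp
  rw [Set.indicator_of_mem hv, ff_eq h0 h1 hu0 hu1 hv.1 hv.2, psi_pos hx,
    show 2 - 2 * d = 1 + (1 - 2 * d) by ring, show 1 - 3 * d = -d + (1 - 2 * d) by ring,
    Real.rpow_add hu0 1, Real.rpow_add hx, Real.rpow_one, ENNReal.ofReal_mul (by positivity),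
    ENNReal.ofReal_mul (by positivity), ENNReal.ofReal_mul (by positivity)]
  ring

lemma ff_aem {d : ℝ} (h0 : 0 < d) (h1 : d < 1) :
    AEStronglyMeasurable (Function.uncurry (ff d))
      ((volume.restrict (Set.Ioo (0:ℝ) 1)).prod (volume.restrict (Set.Ioo (0:ℝ) 1))) := by
  have hm : Measurable (fun x : ℝ × ℝ => (ENNReal.ofReal ((1 - d) ^ 2) *
      ENNReal.ofReal (x.1 ^ (2 - 2 * d) * (1 - x.1 * x.2) ^ (1 - 3 * d)) *
      (GG d x.2 * GG d (x.1 * (1 - x.2) / (1 - x.1 * x.2)))).toReal) := by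
    have := GG_measurable d
    fun_prop
  refine ⟨_, hm.stronglyMeasurable, ?_⟩
  rw [Measure.prod_restrict]
  filter_upwards [ae_restrict_mem (measurableSet_Ioo.prod measurableSet_Ioo)] with x hx
  obtain ⟨⟨hu0, hu1⟩, ⟨hv0, hv1⟩⟩ := hx
  rw [← ff_eq h0 h1 hu0 hu1 hv0 hv1, ENNReal.toReal_ofReal]
  · rfl
  · obtain ⟨hx, hw0, hw1⟩ := w_mem hu0 hu1 hv0 hv1
    have hF1 := hyp_nonneg h0 h1 hv0 hv1
    have hF2 := hyp_nonneg h0 h1 hw0 hw1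
    have : 0 ≤ 1 - x.2 := by linarith
    unfold ff
    positivity

lemma ff_nonneg {d : ℝ} (h0 : 0 < d) (h1 : d < 1) :
    0 ≤ᵐ[(volume.restrict (Set.Ioo (0:ℝ) 1)).prod (volume.restrict (Set.Ioo (0:ℝ) 1))]
      (Function.uncurry (ff d)) := by
  rw [Measure.prod_restrict]
  filter_upwards [ae_restrict_mem (measurableSet_Ioo.prod measurableSet_Ioo)] with x hx
  obtain ⟨⟨hu0, hu1⟩, ⟨hv0, hv1⟩⟩ := hx
  obtain ⟨hx, hw0, hw1⟩ := w_mem hu0 hu1 hv0 hv1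
  have hF1 := hyp_nonneg h0 h1 hv0 hv1
  have hF2 := hyp_nonneg h0 h1 hw0 hw1
  have : 0 ≤ 1 - x.2 := by linarith
  simp only [Function.uncurry, ff, Pi.zero_apply]
  positivity

lemma main_aux (d : ℝ) (hd0 : 0 < d) (hd1 : d < 4 / 5) :
    (∫ u in (0:ℝ)..1, ∫ v in (0:ℝ)..1, ff d u v)
    = Real.Gamma (1 - d) * Real.Gamma (3 - 3 * d) * Real.Gamma (4 - 5 * d) /
        (2 * Real.Gamma (4 - 4 * d) * Real.Gamma (5 - 5 * d)) *
        hyp4F3 1 d (2 - 2 * d) (3 - 3 * d) (2 - d) (3 - 2 * d) (4 - 4 * d) 1 := by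
  have h1 : d < 1 := by linarith
  simp_rw [intervalIntegral.integral_of_le zero_le_one, integral_Ioc_eq_integral_Ioo]
  have hl := ff_lint hd0 h1
  rw [swap4 (fun p a q u => Ker d p a q u) (by unfold Ker; fun_prop), Ker_pauq d hd1,
    JJ_eq hd0 h1] at hl
  have hF : 0 ≤ hyp4F3 1 d (2 - 2 * d) (3 - 3 * d) (2 - d) (3 - 2 * d) (4 - 4 * d) 1 :=
    tsum_nonneg (TT_nonneg hd0 h1)
  have g1 := Real.Gamma_pos_of_pos (show 0 < 1 - d by linarith)
  have g3 := Real.Gamma_pos_of_pos (show 0 < 3 - 3 * d by linarith)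
  have g4 := Real.Gamma_pos_of_pos (show 0 < 4 - 4 * d by linarith)
  have g5 := Real.Gamma_pos_of_pos (show 0 < 4 - 5 * d by linarith)
  have hm := ff_aem hd0 h1
  have hp : ∫⁻ x, ENNReal.ofReal (Function.uncurry (ff d) x)
      ∂((volume.restrict (Set.Ioo (0:ℝ) 1)).prod (volume.restrict (Set.Ioo (0:ℝ) 1))) =
      ∫⁻ u in Set.Ioo 0 1, ∫⁻ v in Set.Ioo 0 1, ENNReal.ofReal (ff d u v) :=
    lintegral_prod _ hm.aemeasurable.ennreal_ofReal
  have hi : Integrable (Function.uncurry (ff d))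
      ((volume.restrict (Set.Ioo (0:ℝ) 1)).prod (volume.restrict (Set.Ioo (0:ℝ) 1))) := by
    refine ⟨hm, ?_⟩
    rw [hasFiniteIntegral_iff_ofReal (ff_nonneg hd0 h1), hp, hl]
    finiteness
  have hd : 0 < 1 - d := by linarith
  have h45 : 0 < 4 - 5 * d := by linarith
  have := integral_prod _ hi
  simp only [Function.uncurry_apply_pair] at this
  rw [← this, integral_eq_lintegral_of_nonneg_ae (ff_nonneg hd0 h1) hm, hp, hl,
    ← ENNReal.ofReal_mul (by positivity), ← ENNReal.ofReal_mul (by positivity),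
    ENNReal.toReal_ofReal (by positivity), show 5 - 5 * d = (4 - 5 * d) + 1 by ring,
    Real.Gamma_add_one h45.ne']
  generalize hyp4F3 1 d (2 - 2 * d) (3 - 3 * d) (2 - d) (3 - 2 * d) (4 - 4 * d) 1 = F
  generalize Real.Gamma (1 - d) = G1 at *
  generalize Real.Gamma (3 - 3 * d) = G3 at *
  generalize Real.Gamma (4 - 4 * d) = G4 at *
  generalize Real.Gamma (4 - 5 * d) = G5 at *
  field_simp

theorem double_integral_J2 (d : ℝ) (hd0 : 0 < d) (hd1 : d < 4 / 5) :
    (∫ u in (0:ℝ)..1, ∫ v in (0:ℝ)..1,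
      u ^ (3 - 3 * d) * v ^ (1 - d) * (1 - v) ^ (1 - d) * (1 - u * v) ^ (-(2 * d)) *
        hyp2F1 1 d (2 - d) v * hyp2F1 1 d (2 - d) (u * (1 - v) / (1 - u * v)))
    = Real.Gamma (1 - d) * Real.Gamma (3 - 3 * d) * Real.Gamma (4 - 5 * d) /
        (2 * Real.Gamma (4 - 4 * d) * Real.Gamma (5 - 5 * d)) *
        hyp4F3 1 d (2 - 2 * d) (3 - 3 * d) (2 - d) (3 - 2 * d) (4 - 4 * d) 1 := by
  exact main_aux d hd0 hd1
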